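/- Let Ω ⊂ ℝⁿ be a bounded open domain, q > 1 and a < q−1, and let δ(x) = dist(x, ∂Ω), with μ the measure δ(x)^a dx on Ω. Assume the weighted Hardy inequality ∫_Ω (|u(x)|/δ(x))^q·δ(x)^a dx ≤ C·∫_Ω |∇u(x)|^q·δ(x)^a dx for every u ∈ C₀^∞(Ω) (which holds, by Necas's theorem, whenever Ω is a bounded Lipschitz domain). If M and Q are N-functions such that (M(u)/u²)·v·w ≤ M(u) + c·v^q + Q(w) for all u, v, w > 0, and M satisfies condition (M), then there exists a constant c' > 0 independent of u such that for every u ∈ C₀^∞(Ω): ‖∇u‖²_{L^M(Ω,μ)} ≤ c'·‖∇⁽²⁾u‖_{L^q(Ω,μ)}·‖u‖_{L^Q(Ω,μ)}. -/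

import Mathlib

/-!
Weighted Orlicz Gagliardo–Nirenberg inequality on a bounded open set `Ω` with `dμ = δ^a dx`.

Write `H` for the Hilbert–Schmidt norm of the Hessian, `λ = √(|∇u|² + ε)` and `P = M(λ)/λ²`.
Near the support of `u` the weight `δ^a` coincides with a Lipschitz function, so the weighted
integration by parts `|∫ ∂ᵢw dμ| ≤ |a| ∫ |w|/δ dμ` follows from Rademacher's theorem and
`|∇δ| ≤ 1` (`abs_integral_fderiv_le`). Applied to `w = P ∂ᵢu · u`, and since Δ₂ gives
`λ M'(λ) ≤ D M(λ)` and hence control of the derivative of `P`, it yields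
`∫ P |∇u|² dμ ≤ C₀ ∫ P |u| (H + |∇u|/δ) dμ` with `C₀` independent of `ε` (`integral_regP_le`).
Hardy's inequality for the partial derivatives of `u` bounds the `L^q(μ)` norm of `H + |∇u|/δ` by
that of `H` (`integral_hess_add_rpow_le`).

Now use the Young-type condition with `v = (H + |∇u|/δ)/α` and `w = |u|/β`. If the modulars of
`H/α` and `u/β` are at most `1`, the right-hand side is at most
`C₀ αβ (∫ M(λ) dμ + const)`, the integral of `M(λ)` being taken over the support of `u`. As `ε → 0`
both `∫ P |∇u|² dμ` and this integral tend to `∫ M(|∇u|) dμ`, which is therefore at most `1` as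
soon as `αβ ≤ θ` for a suitable `θ` (`modular_le_one`).

If `A` and `B` are admissible in the Luxemburg norms of `H` and `u`, this applies to `u/K` with
`K² = θ⁻¹AB` and gives `‖∇u‖² ≤ θ⁻¹AB`; it remains to take the infimum over `A` and `B`.
-/

open MeasureTheory Filter Set

noncomputable section

/-- `E n` is the Euclidean space `ℝⁿ`. -/
abbrev E (n : ℕ) := EuclideanSpace ℝ (Fin n)

/-- An `N`-function: a continuous convex function `M : [0,∞) → [0,∞)` with `M(0) = 0`,
`lim_{λ→0} M(λ)/λ = 0` and `lim_{λ→∞} λ/M(λ) = 0`. -/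
def IsNFunction (M : ℝ → ℝ) : Prop :=
  ContinuousOn M (Ici 0) ∧ ConvexOn ℝ (Ici 0) M ∧ M 0 = 0 ∧
  (∀ x ≥ (0:ℝ), 0 ≤ M x) ∧
  Tendsto (fun l => M l / l) (nhdsWithin 0 (Ioi 0)) (nhds 0) ∧
  Tendsto (fun l => l / M l) atTop (nhds 0)

/-- The Δ₂-condition. -/
def Delta2 (M : ℝ → ℝ) : Prop := ∃ c > 0, ∀ l > (0:ℝ), M (2 * l) ≤ c * M l

/-- Condition (M): `M` is an `N`-function of class `C¹` on `(0,∞)` satisfying the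
Δ₂-condition and such that `M'(λ)/λ` is bounded near zero. -/
def CondM (M : ℝ → ℝ) : Prop :=
  IsNFunction M ∧ ContDiffOn ℝ 1 M (Ioi 0) ∧ Delta2 M ∧
  ∃ ε > (0:ℝ), ∃ C : ℝ, ∀ l ∈ Ioo (0:ℝ) ε, deriv M l / l ≤ C

/-- Condition (Y): `P, Q` are nonnegative nondecreasing measurable functions vanishing at `0`
such that the Young-type inequality `(M(u)/u²)·v·w ≤ M(u) + P(v) + Q(w)` holds. -/
def CondY (M P Q : ℝ → ℝ) : Prop :=
  Measurable P ∧ Measurable Q ∧ (∀ x ≥ (0:ℝ), 0 ≤ P x) ∧ (∀ x ≥ (0:ℝ), 0 ≤ Q x) ∧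
  MonotoneOn P (Ici 0) ∧ MonotoneOn Q (Ici 0) ∧ P 0 = 0 ∧ Q 0 = 0 ∧
  ∀ u > (0:ℝ), ∀ v > (0:ℝ), ∀ w > (0:ℝ), M u / u ^ 2 * v * w ≤ M u + P v + Q w

/-- `φ` is locally Lipschitz on `Ω`. -/
def LocLipschitzOn {α : Type*} [MetricSpace α] (Ω : Set α) (φ : α → ℝ) : Prop :=
  ∀ x ∈ Ω, ∃ s ∈ nhdsWithin x Ω, ∃ K : NNReal, LipschitzOnWith K φ s

/-- The measure `μ(dx) = e^{-φ(x)} dx` on the domain `Ω`. -/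
def measOf {n : ℕ} (Ω : Set (E n)) (φ : E n → ℝ) : Measure (E n) :=
  (volume.restrict Ω).withDensity fun x => ENNReal.ofReal (Real.exp (-φ x))

/-- `u ∈ C₀^∞(Ω)`: smooth and compactly supported inside `Ω`. -/
def TestFun {n : ℕ} (Ω : Set (E n)) (u : E n → ℝ) : Prop :=
  ContDiff ℝ (⊤ : ℕ∞) u ∧ HasCompactSupport u ∧ tsupport u ⊆ Ω

/-- The Hilbert–Schmidt norm of the Hessian of `u` at `x`. -/
def hessNormHS {n : ℕ} (u : E n → ℝ) (x : E n) : ℝ :=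
  Real.sqrt (∑ i : Fin n, ∑ j : Fin n,
    (iteratedFDeriv ℝ 2 u x ![EuclideanSpace.single i (1:ℝ), EuclideanSpace.single j (1:ℝ)]) ^ 2)

/-- The Luxemburg norm `‖f‖_{L^R(μ)} = inf {K > 0 : ∫ R(|f|/K) dμ ≤ 1}`. -/
def luxNorm {α : Type*} [MeasurableSpace α] (R : ℝ → ℝ) (μ : Measure α) (f : α → ℝ) : ℝ :=
  sInf {K : ℝ | 0 < K ∧ ∫ x, R (|f x| / K) ∂μ ≤ 1}

/-- `δ(x) = dist(x, ∂Ω)`, the distance from `x` to the boundary of `Ω`. -/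
def distBdry {n : ℕ} (Ω : Set (E n)) (x : E n) : ℝ := Metric.infDist x (frontier Ω)


open Topology

/-- The weighted measure `δ(x)^a dx` on `Ω`. -/
def wMeas {n : ℕ} (Ω : Set (E n)) (a : ℝ) : Measure (E n) :=
  (volume.restrict Ω).withDensity fun x => ENNReal.ofReal (distBdry Ω x ^ a)

/-! ### The Δ₂-condition -/

/-- For a differentiable convex function, Δ₂ gives `λ M'(λ) ≤ D M(λ)`: compare `M(2λ)` with the
tangent line at `λ`. -/
lemma deriv_mul_le_of_delta2 {M : ℝ → ℝ} (hM : CondM M) :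
    ∃ D ≥ (0:ℝ), ∀ l > (0:ℝ), DifferentiableAt ℝ M l ∧ |deriv M l| * l ≤ D * M l := by
  obtain ⟨⟨-, hconv, h0, hnn, -, -⟩, hd, ⟨c, hc, hc2⟩, -⟩ := hM
  refine ⟨c, hc.le, fun l hl => ?_⟩
  have hdl : DifferentiableAt ℝ M l :=
    (hd.differentiableOn one_ne_zero l hl).differentiableAt (Ioi_mem_nhds hl)
  refine ⟨hdl, ?_⟩
  have h1 : deriv M l ≤ slope M l (2 * l) :=
    hconv.deriv_le_slope (show (0:ℝ) ≤ l from hl.le) (show (0:ℝ) ≤ 2 * l by linarith)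
      (by linarith) hdl
  have h2 : slope M 0 l ≤ deriv M l :=
    hconv.slope_le_deriv (show (0:ℝ) ≤ 0 from le_rfl) (show (0:ℝ) ≤ l from hl.le) hl hdl
  rw [slope_def_field] at h1 h2
  rw [h0, sub_zero, sub_zero] at h2
  have h3 : 0 ≤ deriv M l := le_trans (div_nonneg (hnn l hl.le) hl.le) h2
  rw [abs_of_nonneg h3]
  rw [le_div_iff₀ (by linarith)] at h1
  have := hc2 l hl
  have := hnn l hl.le
  nlinarith

/-- The profile `s ↦ M(√s)/s`, so that `M(λ)/λ² = radial M (λ²)`. -/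
def radial (M : ℝ → ℝ) (s : ℝ) : ℝ := M (√s) / s

lemma radial_nonneg {M : ℝ → ℝ} (hnn : ∀ x ≥ (0:ℝ), 0 ≤ M x) {s : ℝ} (hs : 0 ≤ s) :
    0 ≤ radial M s := div_nonneg (hnn _ (Real.sqrt_nonneg _)) hs

lemma contDiffAt_radial {M : ℝ → ℝ} (hM : CondM M) {s : ℝ} (hs : 0 < s) :
    ContDiffAt ℝ 1 (radial M) s := by
  have h1 : ContDiffAt ℝ 1 M (√s) :=
    (hM.2.1 (√s) (Real.sqrt_pos.2 hs)).contDiffAt (Ioi_mem_nhds (Real.sqrt_pos.2 hs))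
  have h2 : ContDiffAt ℝ 1 Real.sqrt s := Real.contDiffAt_sqrt hs.ne'
  exact (h1.comp s h2).div contDiffAt_id hs.ne'

lemma abs_deriv_radial_le {M : ℝ → ℝ} (hM : CondM M) :
    ∃ D ≥ (0:ℝ), ∀ s > (0:ℝ), |deriv (radial M) s| * s ≤ D * radial M s := by
  obtain ⟨D, hD, h⟩ := deriv_mul_le_of_delta2 hM
  refine ⟨D + 1, by linarith, fun s hs => ?_⟩
  have hr := Real.sqrt_pos.2 hs
  obtain ⟨hd, hb⟩ := h _ hr
  have h1 : HasDerivAt (radial M)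
      ((deriv M (√s) * (1 / (2 * √s)) * s - M (√s) * 1) / s ^ 2) s :=
    (hd.hasDerivAt.comp s (Real.hasDerivAt_sqrt hs.ne')).div (hasDerivAt_id s) hs.ne'
  rw [h1.deriv]
  have hMn : 0 ≤ M (√s) := hM.1.2.2.2.1 _ hr.le
  have e : (deriv M (√s) * (1 / (2 * √s)) * s - M (√s) * 1) / s ^ 2
      = (deriv M (√s) * √s / 2 - M (√s)) / s ^ 2 := by
    congr 1
    have : √s * √s = s := Real.mul_self_sqrt hs.le
    field_simp
    linear_combination (-(deriv M (√s))) * this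
  rw [e, abs_div, abs_of_pos (by positivity : 0 < s ^ 2), radial]
  have h2 : |deriv M (√s) * √s / 2 - M (√s)| ≤ (D + 1) * M (√s) := by
    have : |deriv M (√s) * √s| ≤ D * M (√s) := by rwa [abs_mul, abs_of_pos hr]
    rw [abs_le] at this ⊢
    constructor <;> nlinarith [mul_nonneg hD hMn]
  have : |deriv M (√s) * √s / 2 - M (√s)| / s ^ 2 * s
      = |deriv M (√s) * √s / 2 - M (√s)| / s := by field_simp
  rw [this, ← mul_div_assoc]
  gcongr

/-! ### The weight and the measure -/

lemma distBdry_pos {n : ℕ} [NeZero n] {Ω : Set (E n)} (hΩo : IsOpen Ω)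
    (hΩb : Bornology.IsBounded Ω) {x : E n} (hx : x ∈ Ω) : 0 < distBdry Ω x := by
  have hne : (frontier Ω).Nonempty := by
    rw [Set.nonempty_iff_ne_empty]
    intro h
    rcases isClopen_iff.1 (isClopen_iff_frontier_eq_empty.2 h) with h | h
    · simp [h] at hx
    · rw [h] at hΩb
      exact NormedSpace.unbounded_univ ℝ (E n) hΩb
  refine (isClosed_frontier.notMem_iff_infDist_pos hne).1 fun hf => ?_
  rw [hΩo.frontier_eq] at hf
  exact hf.2 hx

lemma distBdry_nonneg {n : ℕ} (Ω : Set (E n)) (x : E n) : 0 ≤ distBdry Ω x :=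
  Metric.infDist_nonneg

lemma lipschitz_distBdry {n : ℕ} (Ω : Set (E n)) : LipschitzWith 1 (distBdry Ω) :=
  Metric.lipschitz_infDist_pt _

lemma continuous_distBdry {n : ℕ} (Ω : Set (E n)) : Continuous (distBdry Ω) :=
  (lipschitz_distBdry Ω).continuous

lemma integral_wMeas {n : ℕ} (Ω : Set (E n)) (a : ℝ) (F : E n → ℝ) :
    ∫ x, F x ∂(wMeas Ω a) = ∫ x in Ω, F x * distBdry Ω x ^ a := by
  rw [wMeas, integral_withDensity_eq_integral_toReal_smul
    ((continuous_distBdry Ω).measurable.pow_const a).ennreal_ofReal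
    (ae_of_all _ fun _ => ENNReal.ofReal_lt_top)]
  refine integral_congr_ae (ae_of_all _ fun x => ?_)
  simp only [smul_eq_mul, ENNReal.toReal_ofReal (Real.rpow_nonneg (distBdry_nonneg Ω x) a)]
  ring

lemma wMeas_compact_lt_top {n : ℕ} [NeZero n] {Ω : Set (E n)} (hΩo : IsOpen Ω)
    (hΩb : Bornology.IsBounded Ω) (a : ℝ) {S : Set (E n)} (hS : IsCompact S) (hSΩ : S ⊆ Ω) :
    wMeas Ω a S < ⊤ := by
  have hc : ContinuousOn (fun x => distBdry Ω x ^ a) S :=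
    (continuous_distBdry Ω).continuousOn.rpow_const
      fun x hx => Or.inl (distBdry_pos hΩo hΩb (hSΩ hx)).ne'
  have hi : IntegrableOn (fun x => distBdry Ω x ^ a) S volume := hc.integrableOn_compact hS
  rw [wMeas, withDensity_apply _ hS.measurableSet,
    Measure.restrict_restrict hS.measurableSet, inter_eq_left.2 hSΩ]
  exact hi.lintegral_lt_top

lemma integrable_wMeas {n : ℕ} [NeZero n] {Ω : Set (E n)} (hΩo : IsOpen Ω)
    (hΩb : Bornology.IsBounded Ω) (a : ℝ) {S : Set (E n)} (hS : IsCompact S) (hSΩ : S ⊆ Ω)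
    {F : E n → ℝ} (hF : ContinuousOn F S) (h0 : ∀ x ∉ S, F x = 0) :
    Integrable F (wMeas Ω a) := by
  rw [← integrableOn_iff_integrable_of_support_subset (s := S)
    (fun x hx => by_contra fun h => hx (h0 x h))]
  exact hF.integrableOn_of_subset_isCompact hS hS.measurableSet subset_rfl
    (wMeas_compact_lt_top hΩo hΩb a hS hSΩ).ne

lemma ae_wMeas_mem {n : ℕ} {Ω : Set (E n)} (hΩo : IsOpen Ω) (a : ℝ) :
    ∀ᵐ x ∂(wMeas Ω a), x ∈ Ω :=
  (withDensity_absolutelyContinuous _ _).ae_le (ae_restrict_mem hΩo.measurableSet)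

/-- Near a compact subset of `Ω` the weight `δ^a` agrees with a globally Lipschitz function, since
`δ` is Lipschitz and stays in a compact subinterval of `(0,∞)` there. -/
lemma exists_lipschitz_weight {n : ℕ} [NeZero n] {Ω : Set (E n)} (hΩo : IsOpen Ω)
    (hΩb : Bornology.IsBounded Ω) (a : ℝ) {S : Set (E n)} (hS : IsCompact S) (hSΩ : S ⊆ Ω) :
    ∃ (K : NNReal) (f : E n → ℝ), LipschitzWith K f ∧
      ∀ x ∈ S, f =ᶠ[𝓝 x] fun y => distBdry Ω y ^ a := by
  obtain ⟨m, hm, hmS⟩ := hS.exists_forall_le' (continuous_distBdry Ω).continuousOn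
    (fun x hx => distBdry_pos hΩo hΩb (hSΩ hx))
  obtain ⟨R, hR⟩ := (hS.image (continuous_distBdry Ω)).bddAbove
  have hc : ContDiffOn ℝ 1 (fun t : ℝ => t ^ a) (Icc (m / 2) (R + 1)) := by
    intro t ht
    exact (Real.contDiffAt_rpow_const_of_ne (by linarith [ht.1])).contDiffWithinAt
  obtain ⟨K, hK⟩ := hc.exists_lipschitzOnWith one_ne_zero (convex_Icc _ _) isCompact_Icc
  obtain ⟨ψ, hψ, hψe⟩ := hK.extend_real
  refine ⟨K * 1, ψ ∘ distBdry Ω, hψ.comp (lipschitz_distBdry Ω), fun x hx => ?_⟩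
  have h1 : Ioo (m / 2) (R + 1) ∈ 𝓝 (distBdry Ω x) :=
    Ioo_mem_nhds (by linarith [hmS x hx]) (by linarith [hR (mem_image_of_mem _ hx)])
  filter_upwards [(continuous_distBdry Ω).continuousAt h1] with y hy
  exact (hψe (Ioo_subset_Icc_self hy)).symm

/-- Weighted integration by parts: moving a derivative onto the weight `δ^a` costs a factor
`|a|/δ`, because `|∇δ| ≤ 1` almost everywhere. -/
lemma abs_integral_fderiv_le {n : ℕ} [NeZero n] {Ω : Set (E n)} (hΩo : IsOpen Ω)
    (hΩb : Bornology.IsBounded Ω) (a : ℝ) {w : E n → ℝ} (hw : ContDiff ℝ 1 w)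
    (hc : HasCompactSupport w) (hs : tsupport w ⊆ Ω) (v : E n) (hv : ‖v‖ ≤ 1) :
    |∫ x, fderiv ℝ w x v ∂(wMeas Ω a)| ≤ |a| * ∫ x, |w x| / distBdry Ω x ∂(wMeas Ω a) := by
  set S := tsupport w with hSdef
  have hS : IsCompact S := hc
  obtain ⟨K, f, hf, hfS⟩ := exists_lipschitz_weight hΩo hΩb a hS hs
  have hfe : ∀ x ∈ S, f x = distBdry Ω x ^ a := fun x hx => (hfS x hx).eq_of_nhds
  have hw0 : ∀ x ∉ S, w x = 0 := fun x hx => image_eq_zero_of_notMem_tsupport hx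
  have hdw0 : ∀ x ∉ S, fderiv ℝ w x v = 0 := fun x hx => by
    rw [image_eq_zero_of_notMem_tsupport (fun h => hx (tsupport_fderiv_subset ℝ h))]; rfl
  have conv : ∀ F : E n → ℝ, (∀ x ∉ S, F x = 0) →
      ∫ x, F x ∂(wMeas Ω a) = ∫ x, F x * f x := by
    intro F hF
    rw [integral_wMeas, setIntegral_eq_integral_of_forall_compl_eq_zero
      (fun x hx => by rw [hF x (fun h => hx (hs h)), zero_mul])]
    refine integral_congr_ae (ae_of_all _ fun x => ?_)
    by_cases hx : x ∈ S
    · simp only [hfe x hx]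
    · simp only [hF x hx, zero_mul]
  obtain ⟨D, hD⟩ := hw.lipschitzWith_of_hasCompactSupport hc one_ne_zero
  have ibp := hf.integral_lineDeriv_mul_eq (μ := volume) hD hc v
  have hld : ∀ x, lineDeriv ℝ w x (-v) = - fderiv ℝ w x v := fun x => by
    rw [((hw.differentiable one_ne_zero) x).lineDeriv_eq_fderiv, map_neg]
  simp only [hld, neg_mul, integral_neg] at ibp
  rw [conv _ hdw0, conv (fun x => |w x| / distBdry Ω x) (fun x hx => by simp [hw0 x hx]),
    ← abs_neg, ← ibp, ← integral_const_mul, ← Real.norm_eq_abs]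
  refine norm_integral_le_of_norm_le ?_ ?_
  · rw [← integrableOn_iff_integrable_of_support_subset (s := S)
      (fun x hx => by_contra fun h => hx (by simp [hw0 x h]))]
    refine ContinuousOn.integrableOn_compact hS ?_
    refine continuousOn_const.mul (ContinuousOn.mul (ContinuousOn.div
      hw.continuous.abs.continuousOn (continuous_distBdry Ω).continuousOn ?_)
      hf.continuous.continuousOn)
    exact fun x hx => (distBdry_pos hΩo hΩb (hs hx)).ne'
  · filter_upwards [(lipschitz_distBdry Ω).ae_differentiableAt (μ := volume)] with x hx
    by_cases hxS : x ∈ S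
    · have hp := distBdry_pos hΩo hΩb (hs hxS)
      have h1 : HasFDerivAt f ((a * distBdry Ω x ^ (a - 1)) • fderiv ℝ (distBdry Ω) x) x :=
        (hx.hasFDerivAt.rpow_const (Or.inl hp.ne')).congr_of_eventuallyEq (hfS x hxS)
      rw [h1.differentiableAt.lineDeriv_eq_fderiv, h1.fderiv, hfe x hxS]
      have h2 : ‖fderiv ℝ (distBdry Ω) x v‖ ≤ 1 := by
        have := norm_fderiv_le_of_lipschitz ℝ (lipschitz_distBdry Ω) (x₀ := x)
        calc _ ≤ ‖fderiv ℝ (distBdry Ω) x‖ * ‖v‖ := ContinuousLinearMap.le_opNorm _ _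
          _ ≤ 1 * 1 := by gcongr; simpa using this
          _ = 1 := one_mul 1
      simp only [smul_apply, smul_eq_mul, norm_mul, Real.norm_eq_abs] at h2 ⊢
      rw [abs_of_pos (Real.rpow_pos_of_pos hp _)]
      have h3 : distBdry Ω x ^ a = distBdry Ω x ^ (a - 1) * distBdry Ω x := by
        rw [Real.rpow_sub_one hp.ne']; field_simp
      rw [h3]
      have h4 : |a| * (|w x| / distBdry Ω x * (distBdry Ω x ^ (a - 1) * distBdry Ω x))
        = |a| * distBdry Ω x ^ (a - 1) * 1 * |w x| := by field_simp
      rw [h4]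
      gcongr
    · simp [hw0 x hxS]

/-! ### Partial derivatives -/

/-- The `i`-th partial derivative of `u`. -/
def pd {n : ℕ} (i : Fin n) (u : E n → ℝ) (x : E n) : ℝ :=
  fderiv ℝ u x (EuclideanSpace.single i (1:ℝ))

lemma contDiff_pd {n : ℕ} {u : E n → ℝ} (hu : ContDiff ℝ (⊤ : ℕ∞) u) (i : Fin n) :
    ContDiff ℝ (⊤ : ℕ∞) (pd i u) :=
  (hu.fderiv_right (m := (⊤ : ℕ∞)) (by simp)).clm_apply contDiff_const

lemma pd_eq_zero {n : ℕ} {u : E n → ℝ} {x : E n} (i : Fin n) (hx : x ∉ tsupport u) :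
    pd i u x = 0 := by
  rw [pd, image_eq_zero_of_notMem_tsupport (fun h => hx (tsupport_fderiv_subset ℝ h))]; rfl

lemma TestFun.pd {n : ℕ} {Ω : Set (E n)} {u : E n → ℝ} (hu : TestFun Ω u) (i : Fin n) :
    TestFun Ω (pd i u) := by
  have h : tsupport (_root_.pd i u) ⊆ tsupport u := tsupport_fderiv_apply_subset ℝ _
  exact ⟨contDiff_pd hu.1 i, hu.2.1.of_isClosed_subset (isClosed_tsupport _) h,
    h.trans hu.2.2⟩

lemma norm_gradient_sq {n : ℕ} (u : E n → ℝ) (x : E n) :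
    ‖gradient u x‖ ^ 2 = ∑ i, pd i u x ^ 2 := by
  rw [EuclideanSpace.norm_sq_eq]
  refine Finset.sum_congr rfl fun i _ => ?_
  have : gradient u x i = pd i u x := by
    have h := InnerProductSpace.toDual_symm_apply (𝕜 := ℝ) (x := EuclideanSpace.single i (1:ℝ))
      (y := fderiv ℝ u x)
    rw [real_inner_comm, EuclideanSpace.inner_single_left] at h
    simpa [gradient, _root_.pd] using h
  rw [this, Real.norm_eq_abs, sq_abs]

lemma hessNormHS_eq {n : ℕ} {u : E n → ℝ} (hu : ContDiff ℝ (⊤ : ℕ∞) u) (x : E n) :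
    hessNormHS u x = √(∑ i, ∑ j, pd i (pd j u) x ^ 2) := by
  rw [hessNormHS]
  congr 1
  refine Finset.sum_congr rfl fun i _ => Finset.sum_congr rfl fun j _ => ?_
  rw [iteratedFDeriv_two_apply]
  have h : DifferentiableAt ℝ (fderiv ℝ u) x :=
    (hu.fderiv_right (m := 1) (by norm_cast)).differentiable one_ne_zero x
  have : pd i (pd j u) x = fderiv ℝ (fderiv ℝ u) x (EuclideanSpace.single i (1:ℝ))
      (EuclideanSpace.single j (1:ℝ)) := by
    have h2 := h.hasFDerivAt.clm_apply
      (hasFDerivAt_const (EuclideanSpace.single j (1:ℝ) : E n) x)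
    have h3 : fderiv ℝ (pd j u) x = _ := h2.fderiv
    rw [pd, h3]
    simp
  rw [this]
  rfl

lemma hessNormHS_nonneg {n : ℕ} (u : E n → ℝ) (x : E n) : 0 ≤ hessNormHS u x :=
  Real.sqrt_nonneg _

lemma continuous_hessNormHS {n : ℕ} {u : E n → ℝ} (hu : ContDiff ℝ (⊤ : ℕ∞) u) :
    Continuous (hessNormHS u) := by
  have : hessNormHS u = fun x => √(∑ i, ∑ j, pd i (pd j u) x ^ 2) := funext (hessNormHS_eq hu)
  rw [this]
  refine Real.continuous_sqrt.comp (continuous_finsetSum _ fun i _ =>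
    continuous_finsetSum _ fun j _ => ?_)
  exact (contDiff_pd (contDiff_pd hu j) i).continuous.pow 2

lemma continuous_norm_gradient {n : ℕ} {u : E n → ℝ} (hu : ContDiff ℝ (⊤ : ℕ∞) u) :
    Continuous fun x => ‖gradient u x‖ := by
  have : (fun x => ‖gradient u x‖) = fun x => √(∑ i, pd i u x ^ 2) := by
    funext x
    rw [← norm_gradient_sq, Real.sqrt_sq (norm_nonneg _)]
  rw [this]
  exact Real.continuous_sqrt.comp (continuous_finsetSum _ fun i _ =>
    (contDiff_pd hu i).continuous.pow 2)

lemma abs_pd_le {n : ℕ} (u : E n → ℝ) (i : Fin n) (x : E n) : |pd i u x| ≤ ‖gradient u x‖ := by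
  refine abs_le_of_sq_le_sq ?_ (norm_nonneg _)
  rw [norm_gradient_sq]
  exact Finset.single_le_sum (f := fun i => pd i u x ^ 2) (fun i _ => sq_nonneg _)
    (Finset.mem_univ i)

lemma norm_gradient_pd_le {n : ℕ} {u : E n → ℝ} (hu : ContDiff ℝ (⊤ : ℕ∞) u) (j : Fin n)
    (x : E n) : ‖gradient (pd j u) x‖ ≤ hessNormHS u x := by
  rw [hessNormHS_eq hu]
  refine Real.le_sqrt_of_sq_le ?_
  rw [norm_gradient_sq, Finset.sum_comm]
  exact Finset.single_le_sum (f := fun j => ∑ i, pd i (pd j u) x ^ 2)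
    (fun i _ => Finset.sum_nonneg fun _ _ => sq_nonneg _) (Finset.mem_univ j)

lemma abs_pd_pd_le {n : ℕ} {u : E n → ℝ} (hu : ContDiff ℝ (⊤ : ℕ∞) u) (i j : Fin n) (x : E n) :
    |pd i (pd j u) x| ≤ hessNormHS u x :=
  (abs_pd_le _ i x).trans (norm_gradient_pd_le hu j x)

lemma norm_gradient_eq_zero {n : ℕ} {u : E n → ℝ} {x : E n} (hx : x ∉ tsupport u) :
    ‖gradient u x‖ = 0 := by
  have := norm_gradient_sq u x
  simpa [pd_eq_zero _ hx] using this

lemma hessNormHS_eq_zero {n : ℕ} {u : E n → ℝ} (hu : ContDiff ℝ (⊤ : ℕ∞) u) {x : E n}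
    (hx : x ∉ tsupport u) : hessNormHS u x = 0 := by
  have (i j : Fin n) : pd i (pd j u) x = 0 :=
    pd_eq_zero i fun h => hx (tsupport_fderiv_apply_subset ℝ _ h)
  simp [hessNormHS_eq hu, this]

lemma norm_gradient_le_sum {n : ℕ} (u : E n → ℝ) (x : E n) :
    ‖gradient u x‖ ≤ ∑ i, |pd i u x| := by
  refine abs_le_of_sq_le_sq' ?_ (Finset.sum_nonneg fun _ _ => abs_nonneg _) |>.2
  rw [norm_gradient_sq]
  simp_rw [← sq_abs (pd _ u x)]
  exact Finset.sum_sq_le_sq_sum_of_nonneg fun _ _ => abs_nonneg _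

/-! ### The regularised Gagliardo–Nirenberg estimate -/

/-- `P = M(λ)/λ²` evaluated at the regularised slope `λ = √(|∇u|² + ε)`. -/
def regP {n : ℕ} (M : ℝ → ℝ) (ε : ℝ) (u : E n → ℝ) (x : E n) : ℝ :=
  radial M (‖gradient u x‖ ^ 2 + ε)

lemma regP_nonneg {n : ℕ} {M : ℝ → ℝ} (hM : CondM M) {ε : ℝ} (hε : 0 < ε) (u : E n → ℝ)
    (x : E n) : 0 ≤ regP M ε u x :=
  radial_nonneg hM.1.2.2.2.1 (by positivity)

lemma contDiff_regP {n : ℕ} {M : ℝ → ℝ} (hM : CondM M) {ε : ℝ} (hε : 0 < ε) {u : E n → ℝ}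
    (hu : ContDiff ℝ (⊤ : ℕ∞) u) : ContDiff ℝ 1 (regP M ε u) := by
  have hσ : ContDiff ℝ 1 (fun x => ‖gradient u x‖ ^ 2 + ε) := by
    simp_rw [norm_gradient_sq]
    refine (ContDiff.sum fun i _ => ((contDiff_pd hu i).of_le ?_).pow 2).add contDiff_const
    norm_cast
  rw [contDiff_iff_contDiffAt]
  intro x
  exact (contDiffAt_radial hM (s := ‖gradient u x‖ ^ 2 + ε) (by positivity)).comp x hσ.contDiffAt

/-- The derivative of the coefficient is controlled by `P H / |∇u|`, uniformly in `ε`. -/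
lemma abs_pd_regP_mul_le {n : ℕ} {M : ℝ → ℝ} (hM : CondM M) {D : ℝ}
    (hDM : ∀ s > (0:ℝ), |deriv (radial M) s| * s ≤ D * radial M s) {ε : ℝ} (hε : 0 < ε)
    {u : E n → ℝ} (hu : ContDiff ℝ (⊤ : ℕ∞) u) (i : Fin n) (x : E n) :
    |pd i (regP M ε u) x * pd i u x| ≤ 2 * n * D * regP M ε u x * hessNormHS u x := by
  set g := ‖gradient u x‖ with hg
  have hs : 0 < g ^ 2 + ε := by positivity
  have h1 : HasFDerivAt (fun y => ∑ j, pd j u y ^ 2 + ε)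
      (∑ j, (2 * pd j u x ^ 1) • fderiv ℝ (pd j u) x) x := by
    refine HasFDerivAt.add_const _ (HasFDerivAt.fun_sum fun j _ => ?_)
    have hdj := ((contDiff_pd hu j).differentiable (by simp) x).hasFDerivAt
    simpa using hdj.pow 2
  have h2 : HasFDerivAt (regP M ε u)
      (deriv (radial M) (g ^ 2 + ε) • ∑ j, (2 * pd j u x ^ 1) • fderiv ℝ (pd j u) x) x := by
    have h3 := ((contDiffAt_radial hM hs).differentiableAt one_ne_zero).hasDerivAt
    rw [hg, norm_gradient_sq] at h3
    have h4 := h3.comp_hasFDerivAt x h1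
    rw [hg, norm_gradient_sq]
    have e : regP M ε u = radial M ∘ (fun y => ∑ j, pd j u y ^ 2 + ε) := by
      funext y
      simp [regP, norm_gradient_sq]
    rw [e]
    exact h4
  have h5 : pd i (regP M ε u) x
      = deriv (radial M) (g ^ 2 + ε) * ∑ j, 2 * pd j u x * pd i (pd j u) x := by
    rw [pd, h2.fderiv]
    simp [pd]
  have hH := hessNormHS_nonneg u x
  have hgn : 0 ≤ g := norm_nonneg _
  have h6 : |∑ j, 2 * pd j u x * pd i (pd j u) x| ≤ n * (2 * g * hessNormHS u x) := by
    refine (Finset.abs_sum_le_sum_abs _ _).trans ?_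
    calc _ ≤ ∑ j : Fin n, 2 * g * hessNormHS u x := by
          refine Finset.sum_le_sum fun j _ => ?_
          rw [abs_mul, abs_mul, abs_two]
          have := abs_pd_le u j x
          have := abs_pd_pd_le hu i j x
          gcongr
      _ = _ := by simp
  have h7 := hDM _ hs
  have hP := regP_nonneg hM hε u x
  calc |pd i (regP M ε u) x * pd i u x|
      = |deriv (radial M) (g ^ 2 + ε)| * |∑ j, 2 * pd j u x * pd i (pd j u) x| * |pd i u x| := by
        rw [h5, abs_mul, abs_mul]
    _ ≤ |deriv (radial M) (g ^ 2 + ε)| * (n * (2 * g * hessNormHS u x)) * g := by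
        have := abs_pd_le u i x
        gcongr
    _ = 2 * n * hessNormHS u x * (|deriv (radial M) (g ^ 2 + ε)| * g ^ 2) := by ring
    _ ≤ 2 * n * hessNormHS u x * (D * regP M ε u x) := by
        refine mul_le_mul_of_nonneg_left (le_trans ?_ h7) (by positivity)
        gcongr
        linarith
    _ = _ := by ring

/-- Test the weighted integration by parts with the fields `P ∂ᵢu · u` and sum over `i`. The
constant does not depend on `ε`. -/
lemma integral_regP_le {n : ℕ} [NeZero n] {Ω : Set (E n)} (hΩo : IsOpen Ω)
    (hΩb : Bornology.IsBounded Ω) (a : ℝ) {M : ℝ → ℝ} (hM : CondM M) :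
    ∃ C₀ > (0:ℝ), ∀ u : E n → ℝ, TestFun Ω u → ∀ ε > (0:ℝ),
      ∫ x, regP M ε u x * ‖gradient u x‖ ^ 2 ∂(wMeas Ω a) ≤
        C₀ * ∫ x, regP M ε u x * |u x| *
          (hessNormHS u x + ‖gradient u x‖ / distBdry Ω x) ∂(wMeas Ω a) := by
  obtain ⟨D, hD, hDM⟩ := abs_deriv_radial_le hM
  have hn : (0:ℝ) < n := by exact_mod_cast Nat.pos_of_ne_zero (NeZero.ne n)
  refine ⟨n * (|a| + (1 + 2 * n * D)), by positivity, fun u hu ε hε => ?_⟩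
  obtain ⟨husm, huc, hus⟩ := hu
  have hpos : ∀ x ∈ tsupport u, 0 < distBdry Ω x := fun x hx => distBdry_pos hΩo hΩb (hus hx)
  have hu0 : ∀ x ∉ tsupport u, u x = 0 := fun x hx => image_eq_zero_of_notMem_tsupport hx
  have hint : ∀ F : E n → ℝ, ContinuousOn F (tsupport u) → (∀ x ∉ tsupport u, F x = 0) →
      Integrable F (wMeas Ω a) := fun F => integrable_wMeas hΩo hΩb a huc hus
  have cP : Continuous (regP M ε u) := (contDiff_regP hM hε husm).continuous
  have cH := continuous_hessNormHS husm
  have cg := continuous_norm_gradient husm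
  have cu := husm.continuous
  have cd := continuous_distBdry Ω
  have cpd : ∀ i, Continuous (pd i u) := fun i => (contDiff_pd husm i).continuous
  have hPn := regP_nonneg hM hε u
  set B : E n → ℝ := fun x => regP M ε u x * |u x| *
          (hessNormHS u x + ‖gradient u x‖ / distBdry Ω x) with hB
  have iB : Integrable B (wMeas Ω a) := by
    refine hint _ ?_ fun x hx => by simp [hB, hu0 x hx]
    exact (cP.mul cu.abs).continuousOn.mul (cH.continuousOn.add
      (cg.continuousOn.div cd.continuousOn fun x hx => (hpos x hx).ne'))
  have key : ∀ i : Fin n, ∫ x, regP M ε u x * pd i u x ^ 2 ∂(wMeas Ω a) ≤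
      (|a| + (1 + 2 * n * D)) * ∫ x, B x ∂(wMeas Ω a) := by
    intro i
    set w : E n → ℝ := fun x => regP M ε u x * pd i u x * u x with hw
    have c1u : ContDiff ℝ 1 u := husm.of_le (by norm_cast)
    have c1p : ContDiff ℝ 1 (pd i u) := (contDiff_pd husm i).of_le (by norm_cast)
    have hwc : ContDiff ℝ 1 w := ((contDiff_regP hM hε husm).mul c1p).mul c1u
    have hwcs : HasCompactSupport w := HasCompactSupport.mul_left huc
    have hws : tsupport w ⊆ tsupport u := tsupport_mul_subset_right
    have ibp := abs_integral_fderiv_le hΩo hΩb a hwc hwcs (hws.trans hus)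
      (EuclideanSpace.single i (1:ℝ)) (by simp)
    have hpw : ∀ x, fderiv ℝ w x (EuclideanSpace.single i (1:ℝ)) =
        pd i (regP M ε u) x * pd i u x * u x + regP M ε u x * pd i (pd i u) x * u x
          + regP M ε u x * pd i u x ^ 2 := by
      intro x
      have h := (((contDiff_regP hM hε husm).differentiable one_ne_zero x).hasFDerivAt.mul
        (c1p.differentiable one_ne_zero x).hasFDerivAt).mul
        (c1u.differentiable one_ne_zero x).hasFDerivAt
      have h' : fderiv ℝ w x = _ := h.fderiv
      rw [h']
      simp only [add_apply, smul_apply, smul_eq_mul, pd, Pi.mul_apply]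
      ring
    set F : E n → ℝ := fun x => fderiv ℝ w x (EuclideanSpace.single i (1:ℝ)) with hF
    have cF : Continuous F := (hwc.continuous_fderiv one_ne_zero).clm_apply continuous_const
    have hF0 : ∀ x ∉ tsupport u, F x = 0 := fun x hx => pd_eq_zero (u := w) i (fun h => hx (hws h))
    have iF := hint F cF.continuousOn hF0
    have iU : Integrable (fun x => regP M ε u x * pd i u x ^ 2) (wMeas Ω a) :=
      hint _ (cP.mul ((cpd i).pow 2)).continuousOn fun x hx => by simp [pd_eq_zero i hx]
    have hwd : ∫ x, |w x| / distBdry Ω x ∂(wMeas Ω a) ≤ ∫ x, B x ∂(wMeas Ω a) := by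
      refine integral_mono_ae (hint _ ?_ fun x hx => by simp [hw, hu0 x hx]) iB
        (ae_of_all _ fun x => ?_)
      · exact hwc.continuous.abs.continuousOn.div cd.continuousOn fun x hx => (hpos x hx).ne'
      · have h1 := distBdry_nonneg Ω x
        have h2 := abs_pd_le u i x
        have h3 := hessNormHS_nonneg u x
        have h4 := hPn x
        calc |w x| / distBdry Ω x
            = regP M ε u x * |u x| * (|pd i u x| / distBdry Ω x) := by
              simp only [hw, abs_mul, abs_of_nonneg h4]; ring
          _ ≤ regP M ε u x * |u x| * (‖gradient u x‖ / distBdry Ω x) := by gcongr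
          _ ≤ B x := by
              simp only [hB]; gcongr; linarith
    have hR : ∫ x, (regP M ε u x * pd i u x ^ 2 - F x) ∂(wMeas Ω a) ≤
        ∫ x, (1 + 2 * n * D) * B x ∂(wMeas Ω a) := by
      refine integral_mono_ae (iU.sub iF) (iB.const_mul _) (ae_of_all _ fun x => ?_)
      have h1 := abs_pd_regP_mul_le hM hDM hε husm i x
      have h2 := abs_pd_pd_le husm i i x
      have h3 := hPn x
      have h4 := hessNormHS_nonneg u x
      have h5 : 0 ≤ ‖gradient u x‖ / distBdry Ω x :=
        div_nonneg (norm_nonneg _) (distBdry_nonneg Ω x)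
      calc regP M ε u x * pd i u x ^ 2 - F x
          = -(pd i (regP M ε u) x * pd i u x * u x + regP M ε u x * pd i (pd i u) x * u x) := by
            rw [hF]; simp only [hpw]; ring
        _ ≤ |pd i (regP M ε u) x * pd i u x * u x + regP M ε u x * pd i (pd i u) x * u x| :=
            neg_le_abs _
        _ ≤ |pd i (regP M ε u) x * pd i u x| * |u x|
            + regP M ε u x * |pd i (pd i u) x| * |u x| := by
            refine (abs_add_le _ _).trans (le_of_eq ?_)
            rw [abs_mul (pd i (regP M ε u) x * pd i u x), abs_mul (regP M ε u x * _),
              abs_mul (regP M ε u x), abs_of_nonneg h3]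
        _ ≤ (2 * n * D * regP M ε u x * hessNormHS u x) * |u x|
            + regP M ε u x * hessNormHS u x * |u x| := by gcongr
        _ = (1 + 2 * n * D) * (regP M ε u x * |u x| * hessNormHS u x) := by ring
        _ ≤ (1 + 2 * n * D) * B x := by
            simp only [hB]; gcongr; linarith
    rw [integral_sub iU iF, integral_const_mul] at hR
    have h6 := (le_abs_self _).trans ibp
    have h7 : |a| * ∫ x, |w x| / distBdry Ω x ∂(wMeas Ω a) ≤ |a| * ∫ x, B x ∂(wMeas Ω a) := by
      gcongr
    linarith
  have hsum : ∫ x, regP M ε u x * ‖gradient u x‖ ^ 2 ∂(wMeas Ω a)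
      = ∑ i, ∫ x, regP M ε u x * pd i u x ^ 2 ∂(wMeas Ω a) := by
    rw [← integral_finsetSum]
    · refine integral_congr_ae (ae_of_all _ fun x => ?_)
      simp only [norm_gradient_sq, Finset.mul_sum]
    · intro i _
      exact hint _ (cP.mul ((cpd i).pow 2)).continuousOn fun x hx => by simp [pd_eq_zero i hx]
  rw [hsum]
  refine (Finset.sum_le_sum fun i _ => key i).trans (le_of_eq ?_)
  simp only [Finset.sum_const, Finset.card_univ, Fintype.card_fin, nsmul_eq_mul]
  ring

/-! ### The modular inequality -/

/-- Hardy's inequality applied to each partial derivative bounds `H + |∇u|/δ` in `L^q(μ)` by the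
Hessian norm `H`. -/
lemma integral_hess_add_rpow_le {n : ℕ} [NeZero n] {Ω : Set (E n)} (hΩo : IsOpen Ω)
    (hΩb : Bornology.IsBounded Ω) {q a : ℝ} (hq : 1 < q) {C : ℝ}
    (hHardy : ∀ u : E n → ℝ, TestFun Ω u →
      ∫ x in Ω, (|u x| / distBdry Ω x) ^ q * distBdry Ω x ^ a ≤
        C * ∫ x in Ω, ‖gradient u x‖ ^ q * distBdry Ω x ^ a) :
    ∃ C₁ ≥ (0:ℝ), ∀ u : E n → ℝ, TestFun Ω u →
      Integrable (fun x => (hessNormHS u x + ‖gradient u x‖ / distBdry Ω x) ^ q) (wMeas Ω a) ∧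
      ∫ x, (hessNormHS u x + ‖gradient u x‖ / distBdry Ω x) ^ q ∂(wMeas Ω a) ≤
        C₁ * ∫ x, hessNormHS u x ^ q ∂(wMeas Ω a) := by
  have hq0 : 0 < q := by linarith
  refine ⟨((n:ℝ) + 1) ^ (q - 1) * (1 + n * |C|), by positivity, fun u hu => ?_⟩
  obtain ⟨husm, huc, hus⟩ := id hu
  have hpos : ∀ x ∈ tsupport u, 0 < distBdry Ω x := fun x hx => distBdry_pos hΩo hΩb (hus hx)
  have hint : ∀ F : E n → ℝ, ContinuousOn F (tsupport u) → (∀ x ∉ tsupport u, F x = 0) →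
      Integrable F (wMeas Ω a) := fun F => integrable_wMeas hΩo hΩb a huc hus
  have cH := continuous_hessNormHS husm
  have cg := continuous_norm_gradient husm
  have cd := continuous_distBdry Ω
  have cpd : ∀ i, Continuous (pd i u) := fun i => (contDiff_pd husm i).continuous
  have iV : Integrable (fun x => (hessNormHS u x + ‖gradient u x‖ / distBdry Ω x) ^ q)
      (wMeas Ω a) := by
    refine hint _ ((cH.continuousOn.add (cg.continuousOn.div cd.continuousOn
      fun x hx => (hpos x hx).ne')).rpow_const fun x _ => Or.inr hq0.le) fun x hx => ?_
    simp [hessNormHS_eq_zero husm hx, norm_gradient_eq_zero hx, Real.zero_rpow hq0.ne']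
  have iH : Integrable (fun x => hessNormHS u x ^ q) (wMeas Ω a) :=
    hint _ (cH.continuousOn.rpow_const fun x _ => Or.inr hq0.le) fun x hx => by
      simp [hessNormHS_eq_zero husm hx, Real.zero_rpow hq0.ne']
  have iy : ∀ i, Integrable (fun x => (|pd i u x| / distBdry Ω x) ^ q) (wMeas Ω a) := fun i => by
    refine hint _ (((cpd i).abs.continuousOn.div cd.continuousOn
      fun x hx => (hpos x hx).ne').rpow_const fun x _ => Or.inr hq0.le) fun x hx => ?_
    simp [pd_eq_zero i hx, Real.zero_rpow hq0.ne']
  refine ⟨iV, ?_⟩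
  have hy : ∀ i, ∫ x, (|pd i u x| / distBdry Ω x) ^ q ∂(wMeas Ω a) ≤
      |C| * ∫ x, hessNormHS u x ^ q ∂(wMeas Ω a) := by
    intro i
    have h := hHardy (pd i u) (hu.pd i)
    rw [← integral_wMeas Ω a (fun x => (|pd i u x| / distBdry Ω x) ^ q),
      ← integral_wMeas Ω a (fun x => ‖gradient (pd i u) x‖ ^ q)] at h
    have h0 : 0 ≤ ∫ x, ‖gradient (pd i u) x‖ ^ q ∂(wMeas Ω a) :=
      integral_nonneg fun x => by positivity
    have h1 : ∫ x, ‖gradient (pd i u) x‖ ^ q ∂(wMeas Ω a) ≤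
        ∫ x, hessNormHS u x ^ q ∂(wMeas Ω a) := by
      refine integral_mono_of_nonneg (ae_of_all _ fun x => by positivity) iH
        (ae_of_all _ fun x => ?_)
      have := norm_gradient_pd_le husm i x
      dsimp only
      gcongr
    calc _ ≤ _ := h
      _ ≤ |C| * ∫ x, ‖gradient (pd i u) x‖ ^ q ∂(wMeas Ω a) := by
        gcongr
        exact le_abs_self C
      _ ≤ _ := by gcongr
  have hpt : ∀ x, (hessNormHS u x + ‖gradient u x‖ / distBdry Ω x) ^ q ≤
      ((n:ℝ) + 1) ^ (q - 1) *
        (hessNormHS u x ^ q + ∑ i, (|pd i u x| / distBdry Ω x) ^ q) := by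
    intro x
    have hd := distBdry_nonneg Ω x
    have hH := hessNormHS_nonneg u x
    have h := Real.rpow_sum_le_const_mul_sum_rpow_of_nonneg (Finset.univ : Finset (Option (Fin n)))
      (f := fun o => o.elim (hessNormHS u x) fun i => |pd i u x| / distBdry Ω x) hq.le
      (by rintro (_ | i) -
          · exact hH
          · exact div_nonneg (abs_nonneg _) hd)
    simp only [Fintype.sum_option, Option.elim, Finset.card_univ, Fintype.card_option,
      Fintype.card_fin, Nat.cast_add, Nat.cast_one] at h
    refine le_trans ?_ h
    rw [← Finset.sum_div]
    have := norm_gradient_le_sum u x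
    gcongr
  calc _ ≤ ∫ x, ((n:ℝ) + 1) ^ (q - 1) *
        (hessNormHS u x ^ q + ∑ i, (|pd i u x| / distBdry Ω x) ^ q) ∂(wMeas Ω a) :=
        integral_mono iV ((iH.add (integrable_finsetSum _ fun i _ => iy i)).const_mul _) hpt
    _ = ((n:ℝ) + 1) ^ (q - 1) * (∫ x, hessNormHS u x ^ q ∂(wMeas Ω a) +
        ∑ i, ∫ x, (|pd i u x| / distBdry Ω x) ^ q ∂(wMeas Ω a)) := by
        rw [integral_const_mul, integral_add iH (integrable_finsetSum _ fun i _ => iy i),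
          integral_finsetSum _ fun i _ => iy i]
    _ ≤ ((n:ℝ) + 1) ^ (q - 1) * (∫ x, hessNormHS u x ^ q ∂(wMeas Ω a) +
        ∑ i : Fin n, |C| * ∫ x, hessNormHS u x ^ q ∂(wMeas Ω a)) := by
        gcongr with i _
        exact hy i
    _ = _ := by
        simp only [Finset.sum_const, Finset.card_univ, Fintype.card_fin, nsmul_eq_mul]
        ring

lemma IsNFunction.mono {M : ℝ → ℝ} (hM : IsNFunction M) {x y : ℝ} (hx : 0 ≤ x) (hxy : x ≤ y) :
    M x ≤ M y := by
  obtain ⟨-, hc, h0, hnn, -, -⟩ := hM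
  rcases hx.eq_or_lt with rfl | hx
  · rw [h0]; exact hnn y hxy
  have hy : 0 < y := hx.trans_le hxy
  have ht : x / y ≤ 1 := (div_le_one hy).2 hxy
  have h := hc.2 (show (0:ℝ) ≤ 0 from le_rfl) (show (0:ℝ) ≤ y from hy.le)
    (sub_nonneg.2 ht) (div_nonneg hx.le hy.le) (by ring)
  simp only [smul_eq_mul, mul_zero, zero_add, h0, div_mul_cancel₀ x hy.ne'] at h
  nlinarith [hnn y hy.le]

/-- The Young-type condition, extended to vanishing arguments and rescaled. -/
lemma radial_mul_le {M Q : ℝ → ℝ} {q c : ℝ} (hM : IsNFunction M) (hQ : IsNFunction Q) (hc : 0 < c)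
    (hY : ∀ u > (0:ℝ), ∀ v > (0:ℝ), ∀ w > (0:ℝ),
      M u / u ^ 2 * v * w ≤ M u + c * v ^ q + Q w)
    {α β s v w : ℝ} (hα : 0 < α) (hβ : 0 < β) (hs : 0 < s) (hv : 0 ≤ v) (hw : 0 ≤ w) :
    radial M s * w * v ≤ α * β * (M (√s) + c * (v / α) ^ q + Q (w / β)) := by
  have h1 : 0 ≤ M (√s) := hM.2.2.2.1 _ (Real.sqrt_nonneg _)
  have h2 : 0 ≤ Q (w / β) := hQ.2.2.2.1 _ (by positivity)
  have h3 : 0 ≤ α * β * (M (√s) + c * (v / α) ^ q + Q (w / β)) := by positivity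
  rcases hv.eq_or_lt with rfl | hv
  · simpa using h3
  rcases hw.eq_or_lt with rfl | hw
  · simpa using h3
  have h := hY (√s) (Real.sqrt_pos.2 hs) (v / α) (by positivity) (w / β) (by positivity)
  rw [Real.sq_sqrt hs.le] at h
  calc radial M s * w * v = α * β * (M (√s) / s * (v / α) * (w / β)) := by
        rw [radial]; field_simp
    _ ≤ _ := by gcongr

/-- Modular form of the inequality, normalised so that it passes to Luxemburg norms: if `H/α` and
`u/β` have modular at most `1` and `αβ` is small, then `∇u` has modular at most `1`. -/
lemma modular_le_one {n : ℕ} [NeZero n] {Ω : Set (E n)} (hΩo : IsOpen Ω)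
    (hΩb : Bornology.IsBounded Ω) {q a : ℝ} (hq : 1 < q) {C : ℝ}
    (hHardy : ∀ u : E n → ℝ, TestFun Ω u →
      ∫ x in Ω, (|u x| / distBdry Ω x) ^ q * distBdry Ω x ^ a ≤
        C * ∫ x in Ω, ‖gradient u x‖ ^ q * distBdry Ω x ^ a)
    {M Q : ℝ → ℝ} (hM : CondM M) (hQ : IsNFunction Q) {c : ℝ} (hc : 0 < c)
    (hY : ∀ u > (0:ℝ), ∀ v > (0:ℝ), ∀ w > (0:ℝ),
      M u / u ^ 2 * v * w ≤ M u + c * v ^ q + Q w) :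
    ∃ θ > (0:ℝ), ∀ u : E n → ℝ, TestFun Ω u → ∀ α > (0:ℝ), ∀ β > (0:ℝ), α * β ≤ θ →
      ∫ x, (hessNormHS u x / α) ^ q ∂(wMeas Ω a) ≤ 1 →
      ∫ x, Q (|u x| / β) ∂(wMeas Ω a) ≤ 1 →
      ∫ x, M ‖gradient u x‖ ∂(wMeas Ω a) ≤ 1 := by
  obtain ⟨C₀, hC₀, hreg⟩ := integral_regP_le hΩo hΩb a hM
  obtain ⟨C₁, hC₁, hV⟩ := integral_hess_add_rpow_le hΩo hΩb hq hHardy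
  have hq0 : 0 < q := by linarith
  refine ⟨1 / (C₀ * (c * C₁ + 2)), by positivity, fun u hu α hα β hβ hαβ hA hB => ?_⟩
  rw [le_div_iff₀ (by positivity)] at hαβ
  obtain ⟨iV, hVle⟩ := hV u hu
  have hreg := hreg u hu
  obtain ⟨husm, huc, hus⟩ := id hu
  have hpos : ∀ x ∈ tsupport u, 0 < distBdry Ω x := fun x hx => distBdry_pos hΩo hΩb (hus hx)
  have hu0 : ∀ x ∉ tsupport u, u x = 0 := fun x hx => image_eq_zero_of_notMem_tsupport hx
  have hint : ∀ F : E n → ℝ, ContinuousOn F (tsupport u) → (∀ x ∉ tsupport u, F x = 0) →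
      Integrable F (wMeas Ω a) := fun F => integrable_wMeas hΩo hΩb a huc hus
  have cH := continuous_hessNormHS husm
  have cg := continuous_norm_gradient husm
  have cd := continuous_distBdry Ω
  have cu := husm.continuous
  have hMN := hM.1
  have hM0 : M 0 = 0 := hMN.2.2.1
  have hMnn := hMN.2.2.2.1
  have cM : ∀ ε : ℝ, Continuous fun x => M (√(‖gradient u x‖ ^ 2 + ε)) := fun ε =>
    hMN.1.comp_continuous (Real.continuous_sqrt.comp ((cg.pow 2).add continuous_const))
      fun x => Real.sqrt_nonneg _
  set V : E n → ℝ := fun x => hessNormHS u x + ‖gradient u x‖ / distBdry Ω x with hVdef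
  have hVnn : ∀ x, 0 ≤ V x := fun x =>
    add_nonneg (hessNormHS_nonneg u x) (div_nonneg (norm_nonneg _) (distBdry_nonneg Ω x))
  -- `M(λ_ε)` does not vanish off the support of `u`, so it is cut off there.
  set J : ℝ → E n → ℝ := fun ε => (tsupport u).indicator
    fun x => M (√(‖gradient u x‖ ^ 2 + ε)) with hJ
  have iJ : ∀ ε, Integrable (J ε) (wMeas Ω a) := fun ε =>
    hint _ ((cM ε).continuousOn.congr fun x hx => indicator_of_mem hx _)
      fun x hx => indicator_of_notMem hx _
  have iQ : Integrable (fun x => Q (|u x| / β)) (wMeas Ω a) := by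
    refine hint _ (hQ.1.comp_continuous (cu.abs.div_const β)
      fun x => div_nonneg (abs_nonneg _) hβ.le).continuousOn fun x hx => ?_
    simp [hu0 x hx, hQ.2.2.1]
  have iVα : Integrable (fun x => (V x / α) ^ q) (wMeas Ω a) := by
    have : (fun x => (V x / α) ^ q) = fun x => V x ^ q / α ^ q :=
      funext fun x => Real.div_rpow (hVnn x) hα.le q
    rw [this]
    exact iV.div_const _
  have hVα : ∫ x, (V x / α) ^ q ∂(wMeas Ω a) ≤ C₁ := by
    have e1 : ∫ x, (V x / α) ^ q ∂(wMeas Ω a) = (∫ x, V x ^ q ∂(wMeas Ω a)) / α ^ q := by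
      rw [← integral_div]
      exact integral_congr_ae (ae_of_all _ fun x => Real.div_rpow (hVnn x) hα.le q)
    have e2 : ∫ x, (hessNormHS u x / α) ^ q ∂(wMeas Ω a)
        = (∫ x, hessNormHS u x ^ q ∂(wMeas Ω a)) / α ^ q := by
      rw [← integral_div]
      exact integral_congr_ae
        (ae_of_all _ fun x => Real.div_rpow (hessNormHS_nonneg u x) hα.le q)
    rw [e2] at hA
    rw [e1]
    calc _ ≤ (C₁ * ∫ x, hessNormHS u x ^ q ∂(wMeas Ω a)) / α ^ q := by gcongr
      _ = C₁ * ((∫ x, hessNormHS u x ^ q ∂(wMeas Ω a)) / α ^ q) := by ring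
      _ ≤ C₁ * 1 := by gcongr
      _ = C₁ := mul_one _
  have hstep : ∀ ε > (0:ℝ), ∫ x, regP M ε u x * ‖gradient u x‖ ^ 2 ∂(wMeas Ω a) ≤
      C₀ * (α * β) * (∫ x, J ε x ∂(wMeas Ω a) + (c * C₁ + 1)) := by
    intro ε hε
    refine (hreg ε hε).trans ?_
    have h1 : ∫ x, regP M ε u x * |u x| * V x ∂(wMeas Ω a) ≤
        ∫ x, α * β * (J ε x + c * (V x / α) ^ q + Q (|u x| / β)) ∂(wMeas Ω a) := by
      refine integral_mono_of_nonneg (ae_of_all _ fun x => ?_)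
        (((iJ ε).add (iVα.const_mul c)).add iQ |>.const_mul _) (ae_of_all _ fun x => ?_)
      · exact mul_nonneg (mul_nonneg (regP_nonneg hM hε u x) (abs_nonneg _)) (hVnn x)
      · by_cases hx : x ∈ tsupport u
        · have h := radial_mul_le hMN hQ hc hY (s := ‖gradient u x‖ ^ 2 + ε) hα hβ
            (by positivity) (hVnn x) (abs_nonneg (u x))
          simpa only [hJ, indicator_of_mem hx, regP] using h
        · have hj : J ε x = 0 := indicator_of_notMem hx _
          have := hVnn x
          have hQn : 0 ≤ Q (|u x| / β) := hQ.2.2.2.1 _ (by positivity)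
          simp only [hu0 x hx, abs_zero, mul_zero, zero_mul, hj, zero_add] at hQn ⊢
          positivity
    have i2 : Integrable (fun x => J ε x + c * (V x / α) ^ q) (wMeas Ω a) :=
      (iJ ε).add (iVα.const_mul c)
    rw [integral_const_mul, integral_add i2 iQ,
      integral_add (iJ ε) (iVα.const_mul c), integral_const_mul] at h1
    calc _ ≤ C₀ * (α * β * (∫ x, J ε x ∂(wMeas Ω a) + c * ∫ x, (V x / α) ^ q ∂(wMeas Ω a)
            + ∫ x, Q (|u x| / β) ∂(wMeas Ω a))) := by gcongr
      _ ≤ C₀ * (α * β * (∫ x, J ε x ∂(wMeas Ω a) + c * C₁ + 1)) := by gcongr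
      _ = _ := by ring
  -- Let `ε → 0`; everything is dominated by `M(λ_1)` on the support of `u`.
  set e : ℕ → ℝ := fun k => 1 / ((k:ℝ) + 1) with he
  have he0 : ∀ k, 0 < e k := fun k => by simp only [he]; positivity
  have he1 : ∀ k, e k ≤ 1 := fun k => by
    simp only [he]
    rw [div_le_one (by positivity)]
    linarith [(Nat.cast_nonneg k : (0:ℝ) ≤ k)]
  have het : Tendsto e atTop (𝓝 0) := tendsto_one_div_add_atTop_nhds_zero_nat
  have hlimM : ∀ x, Tendsto (fun k => M (√(‖gradient u x‖ ^ 2 + e k))) atTop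
      (𝓝 (M ‖gradient u x‖)) := by
    intro x
    have h1 : Continuous fun t : ℝ => M (√(‖gradient u x‖ ^ 2 + t)) :=
      hMN.1.comp_continuous (Real.continuous_sqrt.comp (continuous_const.add continuous_id))
        fun _ => Real.sqrt_nonneg _
    have h2 := (h1.tendsto 0).comp het
    simpa [Real.sqrt_sq (norm_nonneg _), Function.comp_def] using h2
  have hJ1 : ∀ k x, J (e k) x ≤ J 1 x := by
    intro k x
    refine indicator_le_indicator ?_
    exact hMN.mono (Real.sqrt_nonneg _) (Real.sqrt_le_sqrt (by linarith [he1 k]))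
  have hJnn : ∀ ε x, 0 ≤ J ε x := fun ε x =>
    indicator_nonneg (fun x _ => hMnn _ (Real.sqrt_nonneg _)) x
  have hLx : ∀ k x, regP M (e k) u x * ‖gradient u x‖ ^ 2 ≤ J (e k) x := by
    intro k x
    by_cases hx : x ∈ tsupport u
    · simp only [hJ, indicator_of_mem hx, regP, radial]
      have h1 := he0 k
      have h2 := hMnn _ (Real.sqrt_nonneg (‖gradient u x‖ ^ 2 + e k))
      rw [div_mul_eq_mul_div, div_le_iff₀ (by positivity)]
      gcongr
      linarith
    · simp [norm_gradient_eq_zero hx, hJnn]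
  have limL : Tendsto (fun k => ∫ x, regP M (e k) u x * ‖gradient u x‖ ^ 2 ∂(wMeas Ω a)) atTop
      (𝓝 (∫ x, M ‖gradient u x‖ ∂(wMeas Ω a))) := by
    refine tendsto_integral_of_dominated_convergence (J 1) (fun k => ?_) (iJ 1)
      (fun k => ae_of_all _ fun x => ?_) (ae_of_all _ fun x => ?_)
    · exact ((contDiff_regP hM (he0 k) husm).continuous.mul (cg.pow 2)).aestronglyMeasurable
    · rw [Real.norm_of_nonneg (mul_nonneg (regP_nonneg hM (he0 k) u x) (sq_nonneg _))]
      exact (hLx k x).trans (hJ1 k x)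
    · rcases (norm_nonneg (gradient u x)).eq_or_lt with hg | hg
      · simp [← hg, hM0]
      · have h1 : Tendsto (fun k => ‖gradient u x‖ ^ 2 + e k) atTop
            (𝓝 (‖gradient u x‖ ^ 2)) := by simpa using het.const_add (‖gradient u x‖ ^ 2)
        have h2 := ((hlimM x).div h1 (by positivity)).mul_const (‖gradient u x‖ ^ 2)
        rw [div_mul_cancel₀ _ (by positivity)] at h2
        exact h2
  have limJ : Tendsto (fun k => ∫ x, J (e k) x ∂(wMeas Ω a)) atTop
      (𝓝 (∫ x, M ‖gradient u x‖ ∂(wMeas Ω a))) := by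
    refine tendsto_integral_of_dominated_convergence (J 1)
      (fun k => (iJ _).aestronglyMeasurable) (iJ 1)
      (fun k => ae_of_all _ fun x => ?_) (ae_of_all _ fun x => ?_)
    · rw [Real.norm_of_nonneg (hJnn _ _)]
      exact hJ1 k x
    · by_cases hx : x ∈ tsupport u
      · simpa only [hJ, indicator_of_mem hx] using hlimM x
      · simp [hJ, indicator_of_notMem hx, norm_gradient_eq_zero hx, hM0]
  have hfin := le_of_tendsto_of_tendsto' limL
    ((limJ.add_const (c * C₁ + 1)).const_mul (C₀ * (α * β))) fun k => hstep _ (he0 k)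
  set I := ∫ x, M ‖gradient u x‖ ∂(wMeas Ω a)
  -- With `t = C₀αβ`, one has `t (cC₁ + 2) ≤ 1`, so `I ≤ t (I + cC₁ + 1)` forces `I ≤ 1`.
  have ht : 0 < C₀ * (α * β) := by positivity
  have hcC : 0 ≤ c * C₁ := by positivity
  have h1 : (I - 1) * (1 - C₀ * (α * β)) ≤ 0 := by nlinarith
  have h2 : 0 < 1 - C₀ * (α * β) := by nlinarith
  by_contra h3
  push Not at h3
  nlinarith [mul_pos (sub_pos.2 h3) h2]

/-! ### Luxemburg norms -/

lemma luxNorm_nonneg {α : Type*} [MeasurableSpace α] (R : ℝ → ℝ) (μ : Measure α) (f : α → ℝ) :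
    0 ≤ luxNorm R μ f := Real.sInf_nonneg fun _ hx => hx.1.le

lemma luxNorm_le {α : Type*} [MeasurableSpace α] {R : ℝ → ℝ} {μ : Measure α} {f : α → ℝ} {K : ℝ}
    (hK : 0 < K) (h : ∫ x, R (|f x| / K) ∂μ ≤ 1) : luxNorm R μ f ≤ K :=
  csInf_le ⟨0, fun _ hx => hx.1.le⟩ ⟨hK, h⟩

/-- The infimum defining the Luxemburg norm is over a nonempty set when the modular is finite:
by convexity the modular decays at least linearly under division by `K ≥ 1`. -/
lemma luxSet_nonempty {α : Type*} [MeasurableSpace α] {R : ℝ → ℝ} {μ : Measure α} {f : α → ℝ}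
    (hc : ConvexOn ℝ (Ici 0) R) (h0 : R 0 = 0) (hnn : ∀ x ≥ (0:ℝ), 0 ≤ R x)
    (hi : Integrable (fun x => R |f x|) μ) :
    {K : ℝ | 0 < K ∧ ∫ x, R (|f x| / K) ∂μ ≤ 1}.Nonempty := by
  set K := max 1 (∫ x, R |f x| ∂μ) with hK
  have hK1 : 1 ≤ K := le_max_left _ _
  have hK0 : 0 < K := by linarith
  refine ⟨K, hK0, ?_⟩
  have hK2 : K⁻¹ ≤ 1 := inv_le_one_of_one_le₀ hK1
  have hpt : ∀ x, R (|f x| / K) ≤ R |f x| / K := fun x => by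
    have h := hc.2 (show (0:ℝ) ≤ 0 from le_rfl) (show (0:ℝ) ≤ |f x| from abs_nonneg _)
      (sub_nonneg.2 hK2) (inv_nonneg.2 hK0.le) (by ring)
    simpa [h0, div_eq_inv_mul] using h
  calc ∫ x, R (|f x| / K) ∂μ ≤ ∫ x, R |f x| / K ∂μ :=
        integral_mono_of_nonneg (ae_of_all _ fun x => hnn _ (by positivity)) (hi.div_const K)
          (ae_of_all _ hpt)
    _ = (∫ x, R |f x| ∂μ) / K := integral_div _ _
    _ ≤ 1 := (div_le_one hK0).2 (le_max_right _ _)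

/-! ### Homogeneity of the derivatives -/

lemma TestFun.smul {n : ℕ} {Ω : Set (E n)} {u : E n → ℝ} (hu : TestFun Ω u) (k : ℝ) :
    TestFun Ω (fun x => k * u x) :=
  ⟨contDiff_const.mul hu.1, hu.2.1.mul_left,
    (tsupport_mul_subset_right (f := fun _ => k)).trans hu.2.2⟩

lemma pd_smul {n : ℕ} {u : E n → ℝ} (hu : ContDiff ℝ (⊤ : ℕ∞) u) (k : ℝ) (i : Fin n) :
    pd i (fun x => k * u x) = fun x => k * pd i u x := by
  funext x
  rw [pd, fderiv_const_mul (hu.differentiable (by simp) x)]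
  rfl

lemma norm_gradient_smul {n : ℕ} {u : E n → ℝ} (hu : ContDiff ℝ (⊤ : ℕ∞) u) {k : ℝ} (hk : 0 ≤ k)
    (x : E n) : ‖gradient (fun x => k * u x) x‖ = k * ‖gradient u x‖ := by
  rw [← sq_eq_sq₀ (norm_nonneg _) (by positivity), mul_pow, norm_gradient_sq, norm_gradient_sq,
    Finset.mul_sum]
  simp only [pd_smul hu, mul_pow]

lemma hessNormHS_smul {n : ℕ} {u : E n → ℝ} (hu : ContDiff ℝ (⊤ : ℕ∞) u) {k : ℝ} (hk : 0 ≤ k)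
    (x : E n) : hessNormHS (fun x => k * u x) x = k * hessNormHS u x := by
  rw [hessNormHS_eq (contDiff_const.mul hu), hessNormHS_eq hu]
  simp only [pd_smul hu, pd_smul (contDiff_pd hu _), mul_pow, ← Finset.mul_sum]
  rw [Real.sqrt_mul (sq_nonneg k), Real.sqrt_sq hk]

/-- Theorem 4.7(ii), norm part: weighted Orlicz Gagliardo–Nirenberg inequality for
Luxemburg norms with respect to the measure `δ(x)^a dx`. -/
theorem statement15 {n : ℕ} (Ω : Set (E n)) (hΩo : IsOpen Ω)
    (hΩb : Bornology.IsBounded Ω)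
    (q a : ℝ) (hq : 1 < q) (ha : a < q - 1)
    (C : ℝ)
    (hHardy : ∀ u : E n → ℝ, TestFun Ω u →
      ∫ x in Ω, (|u x| / distBdry Ω x) ^ q * distBdry Ω x ^ a ≤
        C * ∫ x in Ω, ‖gradient u x‖ ^ q * distBdry Ω x ^ a)
    (M Q : ℝ → ℝ) (hM : CondM M) (hMN : IsNFunction M) (hQ : IsNFunction Q)
    (c : ℝ) (hc : 0 < c)
    (hY : ∀ u > (0:ℝ), ∀ v > (0:ℝ), ∀ w > (0:ℝ),
      M u / u ^ 2 * v * w ≤ M u + c * v ^ q + Q w)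
    (μ : Measure (E n))
    (hμ : μ = (volume.restrict Ω).withDensity fun x =>
      ENNReal.ofReal (distBdry Ω x ^ a)) :
    ∃ c' > (0:ℝ), ∀ u : E n → ℝ, TestFun Ω u →
      luxNorm M μ (fun x => ‖gradient u x‖) ^ 2 ≤
        c' * luxNorm (fun l => l ^ q) μ (hessNormHS u) * luxNorm Q μ u := by

  change μ = wMeas Ω a at hμ
  subst hμ
  rcases Nat.eq_zero_or_pos n with rfl | hn
  · -- In dimension `0` the gradient vanishes identically.
    refine ⟨1, one_pos, fun u _ => ?_⟩
    have hg : ∀ x, ‖gradient u x‖ = 0 := fun x => by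
      rw [Subsingleton.elim (gradient u x) 0, norm_zero]
    have h0 : luxNorm M (wMeas Ω a) (fun x => ‖gradient u x‖) = 0 := by
      refine le_antisymm (le_of_forall_gt_imp_ge_of_dense fun K hK => luxNorm_le hK ?_)
        (luxNorm_nonneg _ _ _)
      simp [hg, hMN.2.2.1]
    rw [h0, one_mul]
    simpa using mul_nonneg (luxNorm_nonneg _ (wMeas Ω a) (hessNormHS u))
      (luxNorm_nonneg Q (wMeas Ω a) u)
  have : NeZero n := ⟨hn.ne'⟩
  have hq0 : 0 < q := by linarith
  obtain ⟨θ, hθ, hmod⟩ := modular_le_one hΩo hΩb hq hHardy hM hQ hc hY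
  refine ⟨θ⁻¹, inv_pos.2 hθ, fun u hu => ?_⟩
  obtain ⟨husm, huc, hus⟩ := id hu
  set N := luxNorm M (wMeas Ω a) (fun x => ‖gradient u x‖) with hN
  have hN0 : 0 ≤ N := luxNorm_nonneg _ _ _
  -- The scaling `u ↦ u / K` with `K² = θ⁻¹AB` gives the inequality for all admissible `A`, `B`.
  have key : ∀ A ∈ {K : ℝ | 0 < K ∧ ∫ x, (|hessNormHS u x| / K) ^ q ∂(wMeas Ω a) ≤ 1},
      ∀ B ∈ {K : ℝ | 0 < K ∧ ∫ x, Q (|u x| / K) ∂(wMeas Ω a) ≤ 1}, N ^ 2 ≤ θ⁻¹ * A * B := by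
    rintro A ⟨hA, hA1⟩ B ⟨hB, hB1⟩
    set K := √(θ⁻¹ * A * B) with hK
    have hKpos : 0 < K := Real.sqrt_pos.2 (by positivity)
    have hK2 : K ^ 2 = θ⁻¹ * A * B := Real.sq_sqrt (by positivity)
    have hki : 0 ≤ K⁻¹ := inv_nonneg.2 hKpos.le
    have h := hmod _ (hu.smul K⁻¹) (A / K) (by positivity) (B / K) (by positivity) ?_ ?_ ?_
    · have hNK : N ≤ K := by
        refine luxNorm_le hKpos ?_
        simp only [norm_gradient_smul husm hki] at h
        simp only [← div_eq_inv_mul] at h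
        simpa only [abs_norm] using h
      calc N ^ 2 ≤ K ^ 2 := by gcongr
        _ = _ := hK2
    · rw [div_mul_div_comm, ← sq, hK2]
      apply le_of_eq
      field_simp
    · simp only [hessNormHS_smul husm hki]
      simp only [← div_eq_inv_mul, div_div_div_cancel_right₀ hKpos.ne']
      simpa only [abs_of_nonneg (hessNormHS_nonneg u _)] using hA1
    · simp only [abs_mul, abs_of_nonneg hki]
      simp only [← div_eq_inv_mul, div_div_div_cancel_right₀ hKpos.ne']
      exact hB1
  have neA : {K : ℝ | 0 < K ∧ ∫ x, (|hessNormHS u x| / K) ^ q ∂(wMeas Ω a) ≤ 1}.Nonempty := by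
    refine luxSet_nonempty (convexOn_rpow hq.le) (Real.zero_rpow hq0.ne')
      (fun x hx => Real.rpow_nonneg hx q) (integrable_wMeas hΩo hΩb a huc hus ?_ fun x hx => ?_)
    · exact (continuous_hessNormHS husm).abs.continuousOn.rpow_const fun x _ => Or.inr hq0.le
    · simp [hessNormHS_eq_zero husm hx, Real.zero_rpow hq0.ne']
  have neB : {K : ℝ | 0 < K ∧ ∫ x, Q (|u x| / K) ∂(wMeas Ω a) ≤ 1}.Nonempty := by
    refine luxSet_nonempty hQ.2.1 hQ.2.2.1 hQ.2.2.2.1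
      (integrable_wMeas hΩo hΩb a huc hus ?_ fun x hx => ?_)
    · exact (hQ.1.comp_continuous husm.continuous.abs
        fun x => mem_Ici.2 (abs_nonneg (u x))).continuousOn
    · simp [image_eq_zero_of_notMem_tsupport hx, hQ.2.2.1]
  have h1 : ∀ B ∈ {K : ℝ | 0 < K ∧ ∫ x, Q (|u x| / K) ∂(wMeas Ω a) ≤ 1},
      N ^ 2 ≤ θ⁻¹ * luxNorm (fun l => l ^ q) (wMeas Ω a) (hessNormHS u) * B := by
    intro B hB
    have hB0 : 0 < B := hB.1
    have h : N ^ 2 / (θ⁻¹ * B) ≤ luxNorm (fun l => l ^ q) (wMeas Ω a) (hessNormHS u) :=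
      le_csInf neA fun A hA => by
        rw [div_le_iff₀ (by positivity)]
        linarith [key A hA B hB]
    rw [div_le_iff₀ (by positivity)] at h
    linarith
  rcases (luxNorm_nonneg (fun l => l ^ q) (wMeas Ω a) (hessNormHS u)).eq_or_lt with hz | hz
  · obtain ⟨B, hB⟩ := neB
    have := h1 B hB
    rw [← hz] at this ⊢
    simpa using this
  · have h : N ^ 2 / (θ⁻¹ * luxNorm (fun l => l ^ q) (wMeas Ω a) (hessNormHS u)) ≤
        luxNorm Q (wMeas Ω a) u :=
      le_csInf neB fun B hB => by
        rw [div_le_iff₀ (by positivity)]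
        linarith [h1 B hB]
    rw [div_le_iff₀ (by positivity)] at h
    linarith
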